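/- Let G be a bipartite graph with partite sets P = {p_1,…,p_N} and Q = {q_1,…,q_N}, with M edges and no isolated vertices, and let κ be an integer with 1 ≤ κ ≤ N. Then G contains a κ-biclique — sets P' ⊆ P and Q' ⊆ Q with |P'| = |Q'| = κ such that every vertex of P' is adjacent to every vertex of Q' — if and only if the ensemble {T_P, T_Q} of the biclique construction can be pruned by subtree replacement operations so that the two resulting trees together have exactly 2(N+2)+2κ inner nodes and the resulting ensemble makes at most M − κ² errors on the constructed training set. -/

import Mathlib

/-- The two class labels. -/
inductive Label where
  | blue
  | red
deriving DecidableEq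

/-- A decision tree over examples `ι → ℝ` with classes `{blue, red}`:
every inner node carries a feature and a threshold, every leaf a class label.
An example goes to the left child if its value in the node's feature is at most
the threshold, and to the right child otherwise. -/
inductive DTree (ι : Type) where
  | leaf (c : Label)
  | node (feat : ι) (thr : ℝ) (left right : DTree ι)

namespace DTree

variable {ι : Type}

/-- The class that a decision tree assigns to an example. -/
noncomputable def classify : DTree ι → (ι → ℝ) → Label
  | .leaf c, _ => c
  | .node f t l r, e => if e f ≤ t then l.classify e else r.classify e

/-- The routing path of an example (`false` = left child, `true` = right child);
it is the position of the leaf of the example. -/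
noncomputable def route : DTree ι → (ι → ℝ) → List Bool
  | .leaf _, _ => []
  | .node f t l r, e => if e f ≤ t then false :: l.route e else true :: r.route e

/-- The subtree rooted at a position (`none` if the position is not a node). -/
def subtreeAt : DTree ι → List Bool → Option (DTree ι)
  | T, [] => some T
  | .leaf _, _ :: _ => none
  | .node _ _ l r, b :: p => (if b then r else l).subtreeAt p

/-- Replace the subtree at a given position by another tree. -/
def replaceAt : DTree ι → List Bool → DTree ι → DTree ι
  | _, [], T' => T'
  | .leaf c, _ :: _, _ => .leaf c
  | .node f t l r, b :: p, T' =>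
      if b then .node f t l (r.replaceAt p T') else .node f t (l.replaceAt p T') r

/-- The number of inner nodes of a decision tree. -/
def innerCount : DTree ι → ℕ
  | .leaf _ => 0
  | .node _ _ l r => 1 + l.innerCount + r.innerCount

/-- The position `p` is an inner node of `T`. -/
def IsInnerPos (T : DTree ι) (p : List Bool) : Prop :=
  ∃ f t l r, T.subtreeAt p = some (.node f t l r)

/-- The position `p` is a node of `T`. -/
def IsNodePos (T : DTree ι) (p : List Bool) : Prop :=
  (T.subtreeAt p).isSome

/-- The feature and threshold of the inner node at position `p`. -/
def cutAt (T : DTree ι) (p : List Bool) : Option (ι × ℝ) :=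
  match T.subtreeAt p with
  | some (.node f t _ _) => some (f, t)
  | _ => none

/-- The subtree raising operation at position `q` keeping the child in direction `b`:
the subtree rooted at `q` is replaced by the subtree rooted at its `b`-child; it prunes
the node at `q` together with all inner nodes of the subtree rooted at the other child. -/
def raiseAt (T : DTree ι) (q : List Bool) (b : Bool) : DTree ι :=
  match T.subtreeAt q with
  | some (.node _ _ l r) => T.replaceAt q (if b then r else l)
  | _ => T

end DTree

/-- `E[T,p]`: the examples of `E` whose routing through `T` passes the position `p`. -/
noncomputable def reach {ι : Type} (E : Finset (ι → ℝ)) (T : DTree ι) (p : List Bool) :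
    Finset (ι → ℝ) :=
  E.filter fun e => p <+: T.route e

/-- The number of errors of `T` on the training set `(E, lab)`. -/
noncomputable def errCount {ι : Type} (T : DTree ι) (E : Finset (ι → ℝ))
    (lab : (ι → ℝ) → Label) : ℕ :=
  (E.filter fun e => T.classify e ≠ lab e).card

/-- A most frequent label of the labeled set `(E, lab)` (blue in case of a tie). -/
def majorityLabel {ι : Type} (E : Finset (ι → ℝ)) (lab : (ι → ℝ) → Label) : Label :=
  if (E.filter fun e => lab e = Label.red).card ≤ (E.filter fun e => lab e = Label.blue).card
  then Label.blue else Label.red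

/-- One subtree replacement operation: some inner node of `T` is replaced by a leaf
labeled with a most frequent label of the examples reaching it. -/
def ReplStep {ι : Type} (E : Finset (ι → ℝ)) (lab : (ι → ℝ) → Label)
    (T T' : DTree ι) : Prop :=
  ∃ p, T.IsInnerPos p ∧
    T' = T.replaceAt p (.leaf (majorityLabel (reach E T p) lab))

/-- `T` is a reasonable decision tree for `(E, lab)`: every node is reached by some
example and every leaf carries a most frequent label of the examples reaching it. -/
def Reasonable {ι : Type} (E : Finset (ι → ℝ)) (lab : (ι → ℝ) → Label)
    (T : DTree ι) : Prop :=
  (∀ p, T.IsNodePos p → (reach E T p).Nonempty) ∧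
  (∀ p c, T.subtreeAt p = some (.leaf c) → ∀ c' : Label,
    ((reach E T p).filter fun e => lab e = c').card ≤
      ((reach E T p).filter fun e => lab e = c).card)

/-- Apply a sequence of raising operations (given by positions and kept directions). -/
def applySeq {ι : Type} : DTree ι → List (List Bool × Bool) → DTree ι
  | T, [] => T
  | T, (q, b) :: rest => applySeq (T.raiseAt q b) rest

/-- Each raising operation of the sequence is applied at an inner node. -/
def ValidSeq {ι : Type} : DTree ι → List (List Bool × Bool) → Prop
  | _, [] => True
  | T, (q, b) :: rest => T.IsInnerPos q ∧ ValidSeq (T.raiseAt q b) rest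

/-- The total number of inner nodes pruned by a sequence of raising operations. -/
def seqPruned {ι : Type} : DTree ι → List (List Bool × Bool) → ℕ
  | _, [] => 0
  | T, (q, b) :: rest =>
      (match T.subtreeAt q with
        | some (.node _ _ l r) => 1 + DTree.innerCount (if b then l else r)
        | _ => 0) + seqPruned (T.raiseAt q b) rest

/-- `T'` is obtained from `T` by a (possibly empty) sequence of subtree raising
operations. -/
def RaisedFrom {ι : Type} (T T' : DTree ι) : Prop :=
  ∃ steps, ValidSeq T steps ∧ applySeq T steps = T'

/-- `T'` is obtained from `T` by a sequence of subtree raising operations pruning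
exactly `m` inner nodes in total. -/
def RaisedFromPruning {ι : Type} (T : DTree ι) (m : ℕ) (T' : DTree ι) : Prop :=
  ∃ steps, ValidSeq T steps ∧ seqPruned T steps = m ∧ applySeq T steps = T'

/-- Tracking the position of a node through one raising operation: nodes strictly
below the raised node on the discarded side, and the raised node itself, are pruned
(`none`); all other nodes survive at a possibly shifted position. -/
def stepMap (q : List Bool) (b : Bool) (p : List Bool) : Option (List Bool) :=
  if q <+: p then
    if q ++ [b] <+: p then some (q ++ p.drop (q.length + 1)) else none
  else some p

/-- Tracking the position of a node through a sequence of raising operations. -/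
def seqMap : List (List Bool × Bool) → List Bool → Option (List Bool)
  | [], p => some p
  | (q, b) :: rest, p => (stepMap q b p).bind (seqMap rest)

/-- The number of errors of `T` on a multiset of labeled examples. -/
noncomputable def errCountM {ι : Type} (T : DTree ι) (E : Multiset ((ι → ℝ) × Label)) : ℕ :=
  (E.filter fun q => T.classify q.1 ≠ q.2).card

/-- The examples of a multiset training set reaching position `p` of `T`. -/
noncomputable def reachM {ι : Type} (E : Multiset ((ι → ℝ) × Label)) (T : DTree ι)
    (p : List Bool) : Multiset ((ι → ℝ) × Label) :=
  E.filter fun q => p <+: T.route q.1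

/-- A most frequent label of a multiset of labeled examples (blue in case of
a tie). -/
def majorityM {ι : Type} (E : Multiset ((ι → ℝ) × Label)) : Label :=
  if (E.filter fun q => q.2 = Label.red).card ≤ (E.filter fun q => q.2 = Label.blue).card
  then Label.blue else Label.red

/-- One subtree replacement operation on a tree with respect to a multiset training
set: some inner node is replaced by a leaf labeled with a most frequent label of
the examples reaching it (blue in case of a tie). -/
noncomputable def ReplStepM {ι : Type} (E : Multiset ((ι → ℝ) × Label))
    (T T' : DTree ι) : Prop :=
  ∃ p, T.IsInnerPos p ∧ T' = T.replaceAt p (.leaf (majorityM (reachM E T p)))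

/-- One subtree replacement operation on an ensemble of two decision trees:
a replacement operation is applied to one of the two trees. -/
noncomputable def EnsStep {ι : Type} (E : Multiset ((ι → ℝ) × Label))
    (P P' : DTree ι × DTree ι) : Prop :=
  (ReplStepM E P.1 P'.1 ∧ P.2 = P'.2) ∨ (P.1 = P'.1 ∧ ReplStepM E P.2 P'.2)

/-- The class an ensemble of two trees assigns to an example: blue if at least one
of the trees assigns blue (blue is the dominant label), red otherwise. -/
noncomputable def classifyEns {ι : Type} (T₁ T₂ : DTree ι) (e : ι → ℝ) : Label :=
  if T₁.classify e = Label.blue ∨ T₂.classify e = Label.blue then Label.blue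
  else Label.red

/-- The number of errors of an ensemble of two trees on a multiset training set. -/
noncomputable def errCountEns {ι : Type} (T₁ T₂ : DTree ι)
    (E : Multiset ((ι → ℝ) × Label)) : ℕ :=
  (E.filter fun q => classifyEns T₁ T₂ q.1 ≠ q.2).card

/-- The training set of the biclique construction over the three features
`d_P = 0`, `d_Q = 1`, `d_E = 2`, with `M = |E(G)|` and edges given as pairs
`(i, j) ∈ Fin N × Fin N` (1-based values in the examples): one red edge example
`(i+1, j+1, 1)` per edge; `4NM` red enforcing examples `(N+1, 0, 0)` and `4NM` red
enforcing examples `(0, N+1, 0)`; `M` blue forcing examples `(N+1, 0, 1)` and `M`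
blue forcing examples `(0, N+1, 1)`; and, per vertex `i`, `M` blue separation
examples `(i+1, 0, 0)` and `M` blue separation examples `(0, i+1, 0)`. -/
noncomputable def E15 (N : ℕ) (Eg : Finset (Fin N × Fin N)) :
    Multiset ((Fin 3 → ℝ) × Label) :=
  let M := Eg.card
  (Eg.val.map fun q =>
    ((![((q.1 : ℕ) : ℝ) + 1, ((q.2 : ℕ) : ℝ) + 1, 1] : Fin 3 → ℝ), Label.red))
  + Multiset.replicate (4 * N * M) ((![(N : ℝ) + 1, 0, 0] : Fin 3 → ℝ), Label.red)
  + Multiset.replicate (4 * N * M) ((![0, (N : ℝ) + 1, 0] : Fin 3 → ℝ), Label.red)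
  + Multiset.replicate M ((![(N : ℝ) + 1, 0, 1] : Fin 3 → ℝ), Label.blue)
  + Multiset.replicate M ((![0, (N : ℝ) + 1, 1] : Fin 3 → ℝ), Label.blue)
  + (Finset.univ.val.bind fun i : Fin N =>
      Multiset.replicate M ((![((i : ℕ) : ℝ) + 1, 0, 0] : Fin 3 → ℝ), Label.blue)
      + Multiset.replicate M ((![0, ((i : ℕ) : ℝ) + 1, 0] : Fin 3 → ℝ), Label.blue))

/-- A path of cuts, each with a given feature, threshold and left subtree; the path
continues to the right. -/
def chainT {ι : Type} (cuts : List (ι × ℝ × DTree ι)) (tail : DTree ι) : DTree ι :=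
  cuts.foldr (fun c acc => DTree.node c.1 c.2.1 c.2.2 acc) tail

/-- The tree `T_P` (for `fS = 0 = d_P`) resp. `T_Q` (for `fS = 1 = d_Q`) of the
biclique construction: the root-to-leaf path of cuts `fS ≤ 0, fS ≤ 1, …, fS ≤ N`,
`d_E ≤ 0`; the left child of `fS ≤ 0` is a red leaf; the left child of each cut
`fS ≤ i` (for `i = 1, …, N`) is the `d_E ≤ 0` cut of vertex `i` with a blue left
child and a red right child; the final `d_E ≤ 0` cut on the path has a red left
child and a blue right child. -/
noncomputable def Tside (N : ℕ) (fS : Fin 3) : DTree (Fin 3) :=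
  DTree.node fS 0 (.leaf .red)
    (chainT ((List.range N).map fun i =>
        (fS, ((i : ℝ) + 1), DTree.node 2 0 (.leaf .blue) (.leaf .red)))
      (DTree.node 2 0 (.leaf .red) (.leaf .blue)))

/-!
An inner node on the main path of `T_P` or `T_Q` is reached by the `4NM` red enforcing examples of
that side, which outnumber all blue examples there. Pruning it creates a red leaf, and the `M`
forcing examples of the side are misclassified from then on. So a pruned ensemble with fewer than
`M` errors arises from `T_P` and `T_Q` by pruning vertex cuts only, and each of these becomes a blue
leaf, because its `M` separation examples are at least as many as its edge examples. If the cuts of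
`P'` and `Q'` are kept, exactly the edges outside `P' × Q'` are misclassified. With
`|P'| + |Q'| = 2κ`, at least `κ²` edges lie inside `P' × Q'` if and only if `(P', Q')` is a
`κ`-biclique.
-/

namespace DTree

section General

variable {ι : Type} {T : DTree ι} {p : List Bool} {e : ι → ℝ}

theorem subtreeAt_route (T : DTree ι) (e : ι → ℝ) :
    T.subtreeAt (T.route e) = some (.leaf (T.classify e)) := by
  induction T with
  | leaf c => rfl
  | node f t l r ihl ihr => by_cases h : e f ≤ t <;> simp [route, classify, subtreeAt, h, ihl, ihr]

theorem IsInnerPos.ne_route (hp : T.IsInnerPos p) (e : ι → ℝ) : p ≠ T.route e := by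
  rintro rfl
  obtain ⟨f, t, l, r, h⟩ := hp
  simp [subtreeAt_route] at h

theorem route_replaceAt_of_not_isPrefix (L : DTree ι) (h : ¬ p <+: T.route e) :
    (T.replaceAt p L).route e = T.route e := by
  induction T generalizing p with
  | leaf c => cases p <;> simp_all [replaceAt]
  | node f t l r ihl ihr =>
    rcases p with - | ⟨_ | _, p⟩ <;> by_cases he : e f ≤ t <;>
      simp_all [-not_le, replaceAt, route]

theorem classify_replaceAt_of_not_isPrefix (L : DTree ι) (h : ¬ p <+: T.route e) :
    (T.replaceAt p L).classify e = T.classify e := by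
  induction T generalizing p with
  | leaf c => cases p <;> simp_all [replaceAt]
  | node f t l r ihl ihr =>
    rcases p with - | ⟨_ | _, p⟩ <;> by_cases he : e f ≤ t <;>
      simp_all [-not_le, replaceAt, route, classify]

theorem route_replaceAt_of_isPrefix (L : DTree ι) (h : p <+: T.route e) :
    (T.replaceAt p L).route e = p ++ L.route e := by
  induction T generalizing p with
  | leaf c => cases p <;> simp_all [replaceAt, route]
  | node f t l r ihl ihr =>
    rcases p with - | ⟨_ | _, p⟩ <;> by_cases he : e f ≤ t <;>
      simp_all [-not_le, replaceAt, route]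

theorem classify_replaceAt_of_isPrefix (L : DTree ι) (h : p <+: T.route e) :
    (T.replaceAt p L).classify e = L.classify e := by
  induction T generalizing p with
  | leaf c => cases p <;> simp_all [replaceAt, route]
  | node f t l r ihl ihr =>
    rcases p with - | ⟨_ | _, p⟩ <;> by_cases he : e f ≤ t <;>
      simp_all [-not_le, replaceAt, route, classify]

theorem not_isInnerPos_leaf (c : Label) (p : List Bool) : ¬ (leaf c : DTree ι).IsInnerPos p := by
  cases p <;> simp [IsInnerPos, subtreeAt]

theorem isInnerPos_node_iff {f : ι} {t : ℝ} {l r : DTree ι} :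
    (node f t l r).IsInnerPos p ↔
      p = [] ∨ (∃ q, p = false :: q ∧ l.IsInnerPos q) ∨ ∃ q, p = true :: q ∧ r.IsInnerPos q := by
  rcases p with - | ⟨_ | _, p⟩ <;> simp [IsInnerPos, subtreeAt]

theorem isInnerPos_node_leaf_leaf_iff {f : ι} {t : ℝ} {c c' : Label} :
    (node f t (leaf c) (leaf c')).IsInnerPos p ↔ p = [] := by
  simp [isInnerPos_node_iff, not_isInnerPos_leaf]

end General

section Chain

variable {ι : Type} {cuts : List (ι × ℝ × DTree ι)} {tail : DTree ι} {e : ι → ℝ} {k : ℕ}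
  {p : List Bool}

theorem innerCount_chainT (cuts : List (ι × ℝ × DTree ι)) (tail : DTree ι) :
    (chainT cuts tail).innerCount =
      cuts.length + (cuts.map fun c => c.2.2.innerCount).sum + tail.innerCount := by
  induction cuts with
  | nil => simp [chainT]
  | cons c cuts ih =>
    change 1 + c.2.2.innerCount + (chainT cuts tail).innerCount = _
    simp only [ih, List.length_cons, List.map_cons, List.sum_cons]
    ring

theorem route_chainT_of_forall_lt (h : ∀ c ∈ cuts, c.2.1 < e c.1) :
    (chainT cuts tail).route e = List.replicate cuts.length true ++ tail.route e := by
  induction cuts with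
  | nil => rfl
  | cons c cuts ih =>
    simp_all [chainT, route, List.replicate_succ]

theorem classify_chainT_of_forall_lt (h : ∀ c ∈ cuts, c.2.1 < e c.1) :
    (chainT cuts tail).classify e = tail.classify e := by
  induction cuts with
  | nil => rfl
  | cons c cuts ih =>
    simp_all [chainT, classify]

theorem route_chainT_of_le (hk : k < cuts.length)
    (hlt : ∀ j (hj : j < k), cuts[j].2.1 < e cuts[j].1) (hle : e cuts[k].1 ≤ cuts[k].2.1) :
    (chainT cuts tail).route e = List.replicate k true ++ false :: cuts[k].2.2.route e := by
  induction cuts generalizing k with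
  | nil => simp at hk
  | cons c cuts ih =>
    cases k with
    | zero => simp_all [chainT, route]
    | succ k =>
      have hc : c.2.1 < e c.1 := hlt 0 k.succ_pos
      have hcuts := ih (Nat.lt_of_succ_lt_succ hk)
        (fun j hj => hlt (j + 1) (Nat.succ_lt_succ hj)) hle
      simpa [chainT, route, hc.not_ge, List.replicate_succ] using hcuts

theorem classify_chainT_of_le (hk : k < cuts.length)
    (hlt : ∀ j (hj : j < k), cuts[j].2.1 < e cuts[j].1) (hle : e cuts[k].1 ≤ cuts[k].2.1) :
    (chainT cuts tail).classify e = cuts[k].2.2.classify e := by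
  induction cuts generalizing k with
  | nil => simp at hk
  | cons c cuts ih =>
    cases k with
    | zero => simp_all [chainT, classify]
    | succ k =>
      have hc : c.2.1 < e c.1 := hlt 0 k.succ_pos
      have hcuts := ih (Nat.lt_of_succ_lt_succ hk)
        (fun j hj => hlt (j + 1) (Nat.succ_lt_succ hj)) hle
      simpa [chainT, classify, hc.not_ge] using hcuts

theorem replaceAt_chainT_left (hk : k < cuts.length) (L : DTree ι) :
    (chainT cuts tail).replaceAt (List.replicate k true ++ [false]) L =
      chainT (cuts.set k (cuts[k].1, cuts[k].2.1, L)) tail := by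
  induction cuts generalizing k with
  | nil => simp at hk
  | cons c cuts ih =>
    cases k with
    | zero => simp [chainT, replaceAt]
    | succ k =>
      simpa [chainT, replaceAt, List.replicate_succ] using ih (Nat.lt_of_succ_lt_succ hk)

theorem isInnerPos_chainT_iff :
    (chainT cuts tail).IsInnerPos p ↔
      (∃ k < cuts.length, p = List.replicate k true) ∨
      (∃ k, ∃ hk : k < cuts.length, ∃ q,
        p = List.replicate k true ++ false :: q ∧ cuts[k].2.2.IsInnerPos q) ∨
      ∃ q, p = List.replicate cuts.length true ++ q ∧ tail.IsInnerPos q := by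
  induction cuts generalizing p with
  | nil => simp [chainT]
  | cons c cuts ih =>
    change (node c.1 c.2.1 c.2.2 (chainT cuts tail)).IsInnerPos p ↔ _
    rw [isInnerPos_node_iff, ← Nat.or_exists_add_one (p := fun k => k < _ ∧ _),
      ← Nat.or_exists_add_one (p := fun k => ∃ _ : k < _, _)]
    rcases p with - | ⟨_ | _, p⟩ <;> simp [ih, List.replicate_succ]

end Chain

end DTree

section Ensemble

variable {ι : Type}

theorem reflTransGen_ensStep_iff {E : Multiset ((ι → ℝ) × Label)} {P R : DTree ι × DTree ι} :
    Relation.ReflTransGen (EnsStep E) P R ↔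
      Relation.ReflTransGen (ReplStepM E) P.1 R.1 ∧
        Relation.ReflTransGen (ReplStepM E) P.2 R.2 := by
  constructor
  · intro h
    constructor
    · refine h.lift' Prod.fst ?_
      rintro ⟨A, A'⟩ ⟨B, B'⟩ (⟨hAB, -⟩ | ⟨rfl, -⟩)
      exacts [.single hAB, .refl]
    · refine h.lift' Prod.snd ?_
      rintro ⟨A, A'⟩ ⟨B, B'⟩ (⟨-, rfl⟩ | ⟨-, hAB⟩)
      exacts [.refl, .single hAB]
  · rintro ⟨h₁, h₂⟩
    exact (h₁.lift (fun T => (T, P.2)) fun _ _ h => .inl ⟨h, rfl⟩).trans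
      (h₂.lift (fun T => (R.1, T)) fun _ _ h => .inr ⟨rfl, h⟩)

theorem classifyEns_eq_of_forall_ne (T : Fin 2 → DTree ι) {e : ι → ℝ} (s : Fin 2)
    (h : ∀ t ≠ s, (T t).classify e = .red) :
    classifyEns (T 0) (T 1) e = (T s).classify e := by
  fin_cases s
  · cases h₀ : (T 0).classify e <;> simp [classifyEns, h₀, h 1]
  · cases h₁ : (T 1).classify e <;> simp [classifyEns, h₁, h 0]

end Ensemble

namespace Biclique

open DTree

variable {N : ℕ}

section TrainingSet

/-- The feature vector with value `x` in the feature `d_P` (`s = 0`) or `d_Q` (`s = 1`), value `z`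
in the feature `d_E`, and `0` in the remaining feature. The two sides of the construction are
indexed by `s : Fin 2`, with `s.castSucc` as the feature of side `s`. -/
def sideExample (s : Fin 2) (x z : ℝ) : Fin 3 → ℝ :=
  Fin.snoc (α := fun _ => ℝ) (Pi.single s x) z

/-- The red enforcing example of side `s`. -/
abbrev enforcingExample (N : ℕ) (s : Fin 2) : Fin 3 → ℝ := sideExample s (N + 1) 0

/-- The blue forcing example of side `s`. -/
abbrev forcingExample (N : ℕ) (s : Fin 2) : Fin 3 → ℝ := sideExample s (N + 1) 1

/-- The blue separation example of the vertex `i` of side `s`, with `i` counted from `0`. -/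
abbrev separationExample (s : Fin 2) (i : Fin N) : Fin 3 → ℝ := sideExample s ((i : ℕ) + 1) 0

/-- The red edge example of the edge `q`. -/
def edgeExample (q : Fin N × Fin N) : Fin 3 → ℝ :=
  ![((q.1 : ℕ) : ℝ) + 1, ((q.2 : ℕ) : ℝ) + 1, 1]

@[simp]
theorem sideExample_castSucc (s : Fin 2) (x z : ℝ) : sideExample s x z s.castSucc = x := by
  simp [sideExample]

theorem sideExample_castSucc_of_ne {s t : Fin 2} (h : t ≠ s) (x z : ℝ) :
    sideExample s x z t.castSucc = 0 := by
  simp [sideExample, h]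

@[simp]
theorem sideExample_two (s : Fin 2) (x z : ℝ) : sideExample s x z 2 = z :=
  Fin.snoc_last _ _

theorem sideExample_zero_eq (x z : ℝ) : sideExample 0 x z = ![x, 0, z] := by
  ext k; fin_cases k <;> rfl

theorem sideExample_one_eq (x z : ℝ) : sideExample 1 x z = ![0, x, z] := by
  ext k; fin_cases k <;> rfl

theorem E15_eq (Eg : Finset (Fin N × Fin N)) :
    E15 N Eg = Eg.val.map (fun q => (edgeExample q, .red)) +
      ∑ s, (Multiset.replicate (4 * N * Eg.card) (enforcingExample N s, .red) +
        Multiset.replicate Eg.card (forcingExample N s, .blue) +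
        ∑ i : Fin N, Multiset.replicate Eg.card (separationExample s i, .blue)) := by
  simp only [E15, Fin.sum_univ_two, sideExample_zero_eq, sideExample_one_eq, edgeExample,
    Multiset.bind_add]
  have bind_eq_sum (f : Fin N → Multiset ((Fin 3 → ℝ) × Label)) :
      Finset.univ.val.bind f = ∑ i, f i := rfl
  rw [bind_eq_sum, bind_eq_sum]
  abel

theorem countP_replicate {α : Type*} (p : α → Prop) [DecidablePred p] (n : ℕ) (a : α) :
    (Multiset.replicate n a).countP p = if p a then n else 0 := by
  rw [← Multiset.coe_replicate, Multiset.coe_countP, List.countP_replicate]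
  simp

theorem countP_E15 (Eg : Finset (Fin N × Fin N)) (p : (Fin 3 → ℝ) × Label → Prop)
    [DecidablePred p] :
    (E15 N Eg).countP p =
      (Eg.filter fun q => p (edgeExample q, .red)).card +
        ∑ s, ((if p (enforcingExample N s, .red) then 4 * N * Eg.card else 0) +
          (if p (forcingExample N s, .blue) then Eg.card else 0) +
          ∑ i : Fin N, if p (separationExample s i, .blue) then Eg.card else 0) := by
  simp only [E15_eq, Multiset.countP_add, Multiset.countP_map]
  rw [← Multiset.coe_countPAddMonoidHom]
  simp only [map_sum, map_add, Multiset.coe_countPAddMonoidHom, countP_replicate]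
  rfl

theorem card_filter_red_reachM_E15 (Eg : Finset (Fin N × Fin N)) (T : DTree (Fin 3))
    (p : List Bool) :
    ((reachM (E15 N Eg) T p).filter fun q => q.2 = Label.red).card =
      (Eg.filter fun q => p <+: T.route (edgeExample q)).card +
        ∑ s, if p <+: T.route (enforcingExample N s) then 4 * N * Eg.card else 0 := by
  simp [reachM, Multiset.filter_filter, ← Multiset.countP_eq_card_filter, countP_E15]

theorem card_filter_blue_reachM_E15 (Eg : Finset (Fin N × Fin N)) (T : DTree (Fin 3))
    (p : List Bool) :
    ((reachM (E15 N Eg) T p).filter fun q => q.2 = Label.blue).card =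
      ∑ s, ((if p <+: T.route (forcingExample N s) then Eg.card else 0) +
        ∑ i : Fin N, if p <+: T.route (separationExample s i) then Eg.card else 0) := by
  simp [reachM, Multiset.filter_filter, ← Multiset.countP_eq_card_filter, countP_E15]

end TrainingSet

section Majority

variable {Eg : Finset (Fin N × Fin N)} {T : DTree (Fin 3)} {p : List Bool} {s : Fin 2}

theorem sum_ite_le_card_mul {α : Type*} [Fintype α] (r : α → Prop) [DecidablePred r] (m : ℕ) :
    (∑ a, if r a then m else 0) ≤ Fintype.card α * m :=
  Finset.sum_le_card_nsmul _ _ m fun a _ => by split_ifs <;> simp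

theorem majorityM_reachM_nil (hE : Eg.Nonempty) (T : DTree (Fin 3)) :
    majorityM (reachM (E15 N Eg) T []) = .red := by
  have hM : 0 < Eg.card := hE.card_pos
  have hN : 0 < N := hE.choose.1.pos
  refine if_neg ?_
  rw [card_filter_red_reachM_E15, card_filter_blue_reachM_E15]
  simp only [List.nil_prefix, if_true, Finset.sum_const, Finset.card_univ, Fintype.card_fin,
    Finset.filter_true, smul_eq_mul]
  nlinarith

theorem not_prefix_route_sideExample (hpos : ∀ e, p <+: T.route e → 0 < e s.castSucc)
    {t : Fin 2} (ht : t ≠ s) (x z : ℝ) : ¬ p <+: T.route (sideExample t x z) := fun h =>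
  (hpos _ h).ne' (sideExample_castSucc_of_ne ht.symm x z)

theorem majorityM_reachM_of_enforcing (hE : Eg.Nonempty)
    (hpos : ∀ e, p <+: T.route e → 0 < e s.castSucc) (h : p <+: T.route (enforcingExample N s)) :
    majorityM (reachM (E15 N Eg) T p) = .red := by
  have hM : 0 < Eg.card := hE.card_pos
  have hN : 0 < N := hE.choose.1.pos
  have hsep := sum_ite_le_card_mul
    (fun i : Fin N => p <+: T.route (separationExample s i)) Eg.card
  rw [Fintype.card_fin] at hsep
  refine if_neg ?_
  rw [card_filter_red_reachM_E15, card_filter_blue_reachM_E15,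
    Fintype.sum_eq_single s fun t ht => by simp [not_prefix_route_sideExample hpos ht],
    Fintype.sum_eq_single s fun t ht => by simp [not_prefix_route_sideExample hpos ht], if_pos h]
  split_ifs <;> nlinarith

theorem majorityM_reachM_of_separation
    (hpos : ∀ e, p <+: T.route e → 0 < e s.castSucc) (h : ¬ p <+: T.route (enforcingExample N s))
    (i : Fin N) (hi : p <+: T.route (separationExample s i)) :
    majorityM (reachM (E15 N Eg) T p) = .blue := by
  have hedge : (Eg.filter fun q => p <+: T.route (edgeExample q)).card ≤ Eg.card :=
    Finset.card_filter_le _ _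
  have hsep : Eg.card ≤ ∑ j : Fin N, if p <+: T.route (separationExample s j) then Eg.card else 0 :=
    (if_pos hi).ge.trans (Finset.single_le_sum
      (f := fun j : Fin N => if p <+: T.route (separationExample s j) then Eg.card else 0)
      (fun _ _ => Nat.zero_le _) (Finset.mem_univ i))
  refine if_pos ?_
  rw [card_filter_red_reachM_E15, card_filter_blue_reachM_E15,
    Fintype.sum_eq_single s fun t ht => by simp [not_prefix_route_sideExample hpos ht],
    Fintype.sum_eq_single s fun t ht => by simp [not_prefix_route_sideExample hpos ht], if_neg h]
  omega

end Majority

section SideTree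

variable {s : Fin 2} {K : Finset (Fin N)} {i : Fin N} {e : Fin 3 → ℝ}

/-- The cuts on the main path of the tree `T_P` or `T_Q`, without the final `d_E`-cut, after the
`d_E`-cuts of the vertices outside `K` have been replaced by blue leaves. -/
noncomputable def sideCuts (s : Fin 2) (K : Finset (Fin N)) :
    List (Fin 3 × ℝ × DTree (Fin 3)) :=
  (s.castSucc, 0, .leaf .red) :: List.ofFn fun i : Fin N =>
    (s.castSucc, ((i : ℕ) : ℝ) + 1,
      if i ∈ K then .node 2 0 (.leaf .blue) (.leaf .red) else .leaf .blue)

/-- The tree `T_P` (`s = 0`) or `T_Q` (`s = 1`) in which exactly the `d_E`-cuts of the vertices in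
`K` are kept, the others being replaced by blue leaves. -/
noncomputable def sideTree (s : Fin 2) (K : Finset (Fin N)) : DTree (Fin 3) :=
  chainT (sideCuts s K) (.node 2 0 (.leaf .red) (.leaf .blue))

/-- The position of the `d_E`-cut of the vertex `i` in a side tree. -/
def vertexCutPos (i : Fin N) : List Bool :=
  List.replicate ((i : ℕ) + 1) true ++ [false]

theorem Tside_eq_sideTree (N : ℕ) (s : Fin 2) :
    Tside N s.castSucc = sideTree s (Finset.univ : Finset (Fin N)) := by
  simp only [Tside, sideTree, sideCuts, chainT, Finset.mem_univ, if_true, List.foldr_cons,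
    List.ofFn_eq_map, ← List.map_coe_finRange_eq_range, List.bind_eq_flatMap, List.pure_def,
    ← List.map_eq_flatMap, List.map_map]
  rfl

@[simp]
theorem length_sideCuts (s : Fin 2) (K : Finset (Fin N)) : (sideCuts s K).length = N + 1 := by
  simp [sideCuts]

theorem getElem_sideCuts_fst {k : ℕ} (hk : k < (sideCuts s K).length) :
    (sideCuts s K)[k].1 = s.castSucc := by
  cases k <;> simp [sideCuts]

theorem getElem_sideCuts_snd_fst {k : ℕ} (hk : k < (sideCuts s K).length) :
    (sideCuts s K)[k].2.1 = k := by
  cases k <;> simp [sideCuts]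

theorem getElem_sideCuts_succ_snd_snd (s : Fin 2) (K : Finset (Fin N)) (i : Fin N) :
    ((sideCuts s K)[(i : ℕ) + 1]'(by simp)).2.2 =
      if i ∈ K then .node 2 0 (.leaf .blue) (.leaf .red) else .leaf .blue := by
  simp [sideCuts]

theorem sideCuts_set_succ (s : Fin 2) (K : Finset (Fin N)) (i : Fin N) :
    (sideCuts s K).set (i + 1) (s.castSucc, (i : ℕ) + 1, .leaf .blue) = sideCuts s (K.erase i) := by
  refine List.ext_getElem (by simp) fun k hk hk' => ?_
  cases k with
  | zero => simp [sideCuts]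
  | succ k =>
    by_cases h : (i : ℕ) = k
    · subst h; simp [sideCuts]
    · simp [sideCuts, h, Fin.ext_iff, Ne.symm h]

theorem innerCount_sideTree (s : Fin 2) (K : Finset (Fin N)) :
    (sideTree s K).innerCount = N + 2 + K.card := by
  have hvertex (i : Fin N) : (if i ∈ K then .node 2 0 (.leaf .blue) (.leaf .red)
      else .leaf .blue : DTree (Fin 3)).innerCount = if i ∈ K then 1 else 0 := by
    split_ifs <;> rfl
  have hcuts : ((sideCuts s K).map fun c => c.2.2.innerCount).sum = K.card := by
    simp [sideCuts, innerCount, List.sum_ofFn, Function.comp_def, hvertex]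
  rw [sideTree, innerCount_chainT, hcuts, length_sideCuts, innerCount, innerCount, innerCount]
  ring

theorem lt_of_mem_sideCuts (he : (N : ℝ) < e s.castSucc) :
    ∀ c ∈ sideCuts s K, c.2.1 < e c.1 := by
  intro c hc
  obtain ⟨k, hk, rfl⟩ := List.getElem_of_mem hc
  rw [getElem_sideCuts_fst, getElem_sideCuts_snd_fst]
  rw [length_sideCuts] at hk
  exact lt_of_le_of_lt (by exact_mod_cast Nat.le_of_lt_succ hk) he

theorem getElem_sideCuts_lt (he : e s.castSucc = (i : ℕ) + 1) (j : ℕ) (hj : j < (i : ℕ) + 1) :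
    ((sideCuts s K)[j]'(by simp; omega)).2.1 < e ((sideCuts s K)[j]'(by simp; omega)).1 := by
  rw [getElem_sideCuts_fst, getElem_sideCuts_snd_fst, he]
  exact_mod_cast hj

theorem le_getElem_sideCuts (he : e s.castSucc = (i : ℕ) + 1) :
    e ((sideCuts s K)[(i : ℕ) + 1]'(by simp)).1 ≤ ((sideCuts s K)[(i : ℕ) + 1]'(by simp)).2.1 := by
  rw [getElem_sideCuts_fst, getElem_sideCuts_snd_fst, he]
  push_cast
  rfl

theorem classify_sideTree_of_lt (he : (N : ℝ) < e s.castSucc) :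
    (sideTree s K).classify e = if e 2 ≤ 0 then .red else .blue := by
  rw [sideTree, classify_chainT_of_forall_lt (lt_of_mem_sideCuts he)]
  rfl

theorem classify_sideTree_vertex (he : e s.castSucc = (i : ℕ) + 1) :
    (sideTree s K).classify e = if i ∈ K ∧ 0 < e 2 then .red else .blue := by
  rw [sideTree, classify_chainT_of_le (by simp) (getElem_sideCuts_lt he) (le_getElem_sideCuts he),
    getElem_sideCuts_succ_snd_snd]
  by_cases hK : i ∈ K <;> simp [hK, classify, ← not_le]

theorem replicate_prefix_route_sideTree (he : (N : ℝ) < e s.castSucc) :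
    List.replicate (N + 1) true <+: (sideTree s K).route e := by
  rw [sideTree, route_chainT_of_forall_lt (lt_of_mem_sideCuts he), length_sideCuts]
  exact List.prefix_append _ _

theorem vertexCutPos_prefix_route_sideTree (he : e s.castSucc = (i : ℕ) + 1) :
    vertexCutPos i <+: (sideTree s K).route e := by
  rw [sideTree, route_chainT_of_le (by simp) (getElem_sideCuts_lt he) (le_getElem_sideCuts he)]
  simp [vertexCutPos]

theorem vertexCutPos_not_prefix_route_sideTree (he : (N : ℝ) < e s.castSucc) (i : Fin N) :
    ¬ vertexCutPos i <+: (sideTree s K).route e := by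
  intro h
  have hpath : vertexCutPos i <+: List.replicate (N + 1) true :=
    List.prefix_of_prefix_length_le h (replicate_prefix_route_sideTree he)
      (by simp [vertexCutPos])
  have hmem : false ∈ List.replicate (N + 1) true := hpath.subset (by simp [vertexCutPos])
  simp at hmem

theorem isInnerPos_sideTree_iff {p : List Bool} :
    (sideTree s K).IsInnerPos p ↔
      p <+: List.replicate (N + 1) true ∨ ∃ i ∈ K, p = vertexCutPos i := by
  rw [sideTree, isInnerPos_chainT_iff, List.prefix_replicate_iff]
  simp only [length_sideCuts]
  constructor
  · rintro (⟨k, hk, rfl⟩ | ⟨_ | k, hk, q, rfl, hq⟩ | ⟨q, rfl, hq⟩)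
    · exact .inl (by simp [hk.le])
    · exact absurd hq (not_isInnerPos_leaf _ _)
    · lift k to Fin N using Nat.lt_of_succ_lt_succ hk
      rw [getElem_sideCuts_succ_snd_snd] at hq
      split_ifs at hq with hK
      · rw [isInnerPos_node_leaf_leaf_iff] at hq
        exact .inr ⟨k, hK, hq ▸ rfl⟩
      · exact absurd hq (not_isInnerPos_leaf _ _)
    · rw [isInnerPos_node_leaf_leaf_iff] at hq
      exact .inl (by simp [hq])
  · rintro (⟨hlen, hp⟩ | ⟨i, hi, rfl⟩)
    · rcases hlen.lt_or_eq with hlt | heq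
      · exact .inl ⟨_, hlt, hp⟩
      · exact .inr (.inr ⟨[], by simp [← heq, ← hp], isInnerPos_node_leaf_leaf_iff.2 rfl⟩)
    · refine .inr (.inl ⟨i + 1, by simp, [], rfl, ?_⟩)
      rw [getElem_sideCuts_succ_snd_snd, if_pos hi]
      exact isInnerPos_node_leaf_leaf_iff.2 rfl

theorem replaceAt_sideTree_vertexCutPos (s : Fin 2) (K : Finset (Fin N)) (i : Fin N) :
    (sideTree s K).replaceAt (vertexCutPos i) (.leaf .blue) = sideTree s (K.erase i) := by
  rw [sideTree, vertexCutPos, replaceAt_chainT_left (by simp), getElem_sideCuts_fst,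
    getElem_sideCuts_snd_fst, sideTree, ← sideCuts_set_succ]
  push_cast
  rfl

end SideTree

section Pruning

variable {Eg : Finset (Fin N × Fin N)} {s : Fin 2} {K : Finset (Fin N)} {T T' : DTree (Fin 3)}
  {p : List Bool}

/-- The tree `T` sends every example of value at most `0` in the feature of side `s` to a red leaf
of depth at most one. Prunings of `T_P` and `T_Q` keep this property, so that the class of an
example of the other side is decided by the other tree. -/
def RedOnNonpos (s : Fin 2) (T : DTree (Fin 3)) : Prop :=
  ∀ e, e s.castSucc ≤ 0 → T.route e <+: [false] ∧ T.classify e = .red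

/-- The forcing and the enforcing example of side `s` share a red leaf of `T`. This is the result
of pruning the main path of `T_P` or `T_Q`. -/
def Collapsed (N : ℕ) (s : Fin 2) (T : DTree (Fin 3)) : Prop :=
  T.route (forcingExample N s) = T.route (enforcingExample N s) ∧
    T.classify (forcingExample N s) = .red

theorem RedOnNonpos.pos_of_isPrefix (h : RedOnNonpos s T) (hp : T.IsInnerPos p) (hne : p ≠ [])
    (e : Fin 3 → ℝ) (hpe : p <+: T.route e) : 0 < e s.castSucc := by
  by_contra! he
  have hroute : T.route e <+: [false] := (h e he).1
  have hlen : (T.route e).length ≤ p.length :=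
    hroute.length_le.trans (List.length_pos_iff.2 hne)
  exact hp.ne_route e (hpe.eq_of_length_le hlen)

theorem RedOnNonpos.majorityM_reachM (h : RedOnNonpos s T) (hE : Eg.Nonempty)
    (hp : T.IsInnerPos p) (henf : p <+: T.route (enforcingExample N s)) :
    majorityM (reachM (E15 N Eg) T p) = .red := by
  rcases eq_or_ne p [] with rfl | hne
  · exact majorityM_reachM_nil hE T
  · exact majorityM_reachM_of_enforcing hE (h.pos_of_isPrefix hp hne) henf

theorem RedOnNonpos.replStepM (h : RedOnNonpos s T) (hE : Eg.Nonempty)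
    (hstep : ReplStepM (E15 N Eg) T T') : RedOnNonpos s T' := by
  obtain ⟨p, hp, rfl⟩ := hstep
  intro e he
  by_cases hpe : p <+: T.route e
  · obtain rfl : p = [] := by
      by_contra hne
      exact he.not_gt (h.pos_of_isPrefix hp hne e hpe)
    rw [majorityM_reachM_nil hE, route_replaceAt_of_isPrefix _ hpe,
      classify_replaceAt_of_isPrefix _ hpe]
    exact ⟨List.nil_prefix, rfl⟩
  · rw [route_replaceAt_of_not_isPrefix _ hpe, classify_replaceAt_of_not_isPrefix _ hpe]
    exact h e he

theorem redOnNonpos_sideTree (s : Fin 2) (K : Finset (Fin N)) : RedOnNonpos s (sideTree s K) := by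
  intro e he
  simp [sideTree, sideCuts, chainT, route, classify, he]

theorem collapsed_replaceAt_leaf_red (hforc : p <+: T.route (forcingExample N s))
    (henf : p <+: T.route (enforcingExample N s)) :
    Collapsed N s (T.replaceAt p (.leaf .red)) := by
  refine ⟨?_, classify_replaceAt_of_isPrefix _ hforc⟩
  rw [route_replaceAt_of_isPrefix _ hforc, route_replaceAt_of_isPrefix _ henf]
  rfl

theorem Collapsed.replStepM (h : Collapsed N s T) (hT : RedOnNonpos s T) (hE : Eg.Nonempty)
    (hstep : ReplStepM (E15 N Eg) T T') : Collapsed N s T' := by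
  obtain ⟨p, hp, rfl⟩ := hstep
  by_cases hforc : p <+: T.route (forcingExample N s)
  · have henf : p <+: T.route (enforcingExample N s) := h.1 ▸ hforc
    rw [hT.majorityM_reachM hE hp henf]
    exact collapsed_replaceAt_leaf_red hforc henf
  · have henf : ¬ p <+: T.route (enforcingExample N s) := h.1 ▸ hforc
    rw [Collapsed, route_replaceAt_of_not_isPrefix _ hforc, route_replaceAt_of_not_isPrefix _ henf,
      classify_replaceAt_of_not_isPrefix _ hforc]
    exact h

theorem majorityM_reachM_vertexCutPos (Eg : Finset (Fin N × Fin N)) (s : Fin 2) {i : Fin N}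
    (hi : i ∈ K) : majorityM (reachM (E15 N Eg) (sideTree s K) (vertexCutPos i)) = .blue :=
  majorityM_reachM_of_separation
    ((redOnNonpos_sideTree s K).pos_of_isPrefix (isInnerPos_sideTree_iff.2 (.inr ⟨i, hi, rfl⟩))
      (by simp [vertexCutPos]))
    (vertexCutPos_not_prefix_route_sideTree (by simp) i) i
    (vertexCutPos_prefix_route_sideTree (by simp))

theorem replStepM_sideTree_erase (Eg : Finset (Fin N × Fin N)) (s : Fin 2) {i : Fin N}
    (hi : i ∈ K) : ReplStepM (E15 N Eg) (sideTree s K) (sideTree s (K.erase i)) :=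
  ⟨vertexCutPos i, isInnerPos_sideTree_iff.2 (.inr ⟨i, hi, rfl⟩), by
    rw [majorityM_reachM_vertexCutPos Eg s hi, replaceAt_sideTree_vertexCutPos]⟩

theorem exists_eq_sideTree_or_collapsed_of_replStepM (hE : Eg.Nonempty)
    (hstep : ReplStepM (E15 N Eg) (sideTree s K) T') :
    (∃ K' : Finset (Fin N), T' = sideTree s K') ∨ Collapsed N s T' := by
  obtain ⟨p, hp, rfl⟩ := hstep
  rcases isInnerPos_sideTree_iff.1 hp with hpath | ⟨i, hi, rfl⟩
  · have prefix_route (z : ℝ) : p <+: (sideTree s K).route (sideExample s (N + 1) z) :=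
      hpath.trans (replicate_prefix_route_sideTree (by simp))
    refine .inr ?_
    rw [(redOnNonpos_sideTree s K).majorityM_reachM hE hp (prefix_route 0)]
    exact collapsed_replaceAt_leaf_red (prefix_route 1) (prefix_route 0)
  · refine .inl ⟨K.erase i, ?_⟩
    rw [majorityM_reachM_vertexCutPos Eg s hi, replaceAt_sideTree_vertexCutPos]

theorem redOnNonpos_of_reflTransGen (hE : Eg.Nonempty)
    (h : Relation.ReflTransGen (ReplStepM (E15 N Eg)) (Tside N s.castSucc) T) :
    RedOnNonpos s T := by
  induction h with
  | refl => exact Tside_eq_sideTree N s ▸ redOnNonpos_sideTree s _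
  | tail _ hstep ih => exact ih.replStepM hE hstep

theorem exists_eq_sideTree_or_collapsed_of_reflTransGen (hE : Eg.Nonempty)
    (h : Relation.ReflTransGen (ReplStepM (E15 N Eg)) (Tside N s.castSucc) T) :
    (∃ K : Finset (Fin N), T = sideTree s K) ∨ Collapsed N s T := by
  induction h with
  | refl => exact .inl ⟨_, Tside_eq_sideTree N s⟩
  | tail hreach hstep ih =>
    rcases ih with ⟨K, rfl⟩ | hcollapsed
    · exact exists_eq_sideTree_or_collapsed_of_replStepM hE hstep
    · exact .inr (hcollapsed.replStepM (redOnNonpos_of_reflTransGen hE hreach) hE hstep)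

theorem reflTransGen_replStepM_sideTree (Eg : Finset (Fin N × Fin N)) (s : Fin 2)
    (K : Finset (Fin N)) :
    Relation.ReflTransGen (ReplStepM (E15 N Eg)) (Tside N s.castSucc) (sideTree s K) := by
  suffices h : ∀ A : Finset (Fin N), Relation.ReflTransGen (ReplStepM (E15 N Eg))
      (Tside N s.castSucc) (sideTree s Aᶜ) from compl_compl K ▸ h Kᶜ
  intro A
  induction A using Finset.induction_on with
  | empty => rw [Tside_eq_sideTree, Finset.compl_empty]
  | insert i A hi ih =>
    rw [Finset.compl_insert]
    exact ih.tail (replStepM_sideTree_erase Eg s (Finset.mem_compl.2 hi))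

end Pruning

section Errors

variable {Eg : Finset (Fin N × Fin N)} {T : Fin 2 → DTree (Fin 3)}

theorem classifyEns_sideExample (hT : ∀ t, RedOnNonpos t (T t)) (s : Fin 2) (x z : ℝ) :
    classifyEns (T 0) (T 1) (sideExample s x z) = (T s).classify (sideExample s x z) :=
  classifyEns_eq_of_forall_ne T s fun t ht =>
    (hT t _ (sideExample_castSucc_of_ne ht x z).le).2

theorem errCountEns_E15 (Eg : Finset (Fin N × Fin N)) (hT : ∀ s, RedOnNonpos s (T s)) :
    errCountEns (T 0) (T 1) (E15 N Eg) =
      (Eg.filter fun q => classifyEns (T 0) (T 1) (edgeExample q) ≠ .red).card +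
        ∑ s, ((if (T s).classify (enforcingExample N s) ≠ .red then 4 * N * Eg.card else 0) +
          (if (T s).classify (forcingExample N s) ≠ .blue then Eg.card else 0) +
          ∑ i : Fin N, if (T s).classify (separationExample s i) ≠ .blue then Eg.card else 0) := by
  simp only [errCountEns, ← Multiset.countP_eq_card_filter, countP_E15,
    classifyEns_sideExample hT]

theorem card_le_errCountEns_of_collapsed (hT : ∀ s, RedOnNonpos s (T s)) {s : Fin 2}
    (h : Collapsed N s (T s)) : Eg.card ≤ errCountEns (T 0) (T 1) (E15 N Eg) := by
  have hforc : (T s).classify (forcingExample N s) ≠ .blue := by simp [h.2]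
  rw [errCountEns_E15 Eg hT]
  refine le_add_left (le_trans ?_ (Finset.single_le_sum (fun _ _ => Nat.zero_le _)
    (Finset.mem_univ s)))
  rw [if_pos hforc]
  omega

theorem classifyEns_sideTree_edgeExample (P Q : Finset (Fin N)) (q : Fin N × Fin N) :
    classifyEns (sideTree 0 P) (sideTree 1 Q) (edgeExample q) =
      if q ∈ P ×ˢ Q then .red else .blue := by
  have h₀ : (sideTree 0 P).classify (edgeExample q) = if q.1 ∈ P then .red else .blue := by
    rw [classify_sideTree_vertex (s := 0) (i := q.1) rfl]
    simp [edgeExample]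
  have h₁ : (sideTree 1 Q).classify (edgeExample q) = if q.2 ∈ Q then .red else .blue := by
    rw [classify_sideTree_vertex (s := 1) (i := q.2) rfl]
    simp [edgeExample]
  by_cases hP : q.1 ∈ P <;> by_cases hQ : q.2 ∈ Q <;> simp [classifyEns, h₀, h₁, hP, hQ]

theorem errCountEns_sideTree (Eg : Finset (Fin N × Fin N)) (P Q : Finset (Fin N)) :
    errCountEns (sideTree 0 P) (sideTree 1 Q) (E15 N Eg) = (Eg \ P ×ˢ Q).card := by
  have hT : ∀ s, RedOnNonpos s (![sideTree 0 P, sideTree 1 Q] s) :=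
    Fin.forall_fin_two.2 ⟨redOnNonpos_sideTree 0 P, redOnNonpos_sideTree 1 Q⟩
  have henf (s : Fin 2) (K : Finset (Fin N)) :
      (sideTree s K).classify (enforcingExample N s) = .red := by
    simp [classify_sideTree_of_lt]
  have hforc (s : Fin 2) (K : Finset (Fin N)) :
      (sideTree s K).classify (forcingExample N s) = .blue := by
    simp [classify_sideTree_of_lt]
  have hsep (s : Fin 2) (K : Finset (Fin N)) (i : Fin N) :
      (sideTree s K).classify (separationExample s i) = .blue := by
    simp [classify_sideTree_vertex (i := i)]
  have hcount := errCountEns_E15 Eg hT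
  simpa [henf, hforc, hsep, classifyEns_sideTree_edgeExample, Finset.sdiff_eq_filter]
    using hcount

theorem exists_eq_sideTree_of_errCountEns_lt
    (hreach : ∀ s, Relation.ReflTransGen (ReplStepM (E15 N Eg)) (Tside N s.castSucc) (T s))
    (herr : errCountEns (T 0) (T 1) (E15 N Eg) < Eg.card) (s : Fin 2) :
    ∃ K : Finset (Fin N), T s = sideTree s K := by
  have hE : Eg.Nonempty := Finset.card_pos.1 (Nat.zero_lt_of_lt herr)
  have hT : ∀ t, RedOnNonpos t (T t) := fun t => redOnNonpos_of_reflTransGen hE (hreach t)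
  exact (exists_eq_sideTree_or_collapsed_of_reflTransGen hE (hreach s)).resolve_right
    fun h => (card_le_errCountEns_of_collapsed hT h).not_gt herr

end Errors

/-- `(P, Q)` is a `κ`-biclique of the bipartite graph with edge set `E`, an edge being a pair of a
vertex of the first and a vertex of the second partite set. -/
def IsBiclique {α β : Type*} (E : Finset (α × β)) (κ : ℕ) (P : Finset α) (Q : Finset β) : Prop :=
  P.card = κ ∧ Q.card = κ ∧ ∀ i ∈ P, ∀ j ∈ Q, (i, j) ∈ E

-- Of all rectangles with half-perimeter `2 * κ`, only the square has area at least `κ ^ 2`.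
theorem isBiclique_iff_sq_le_card_inter {α β : Type*} [DecidableEq α] [DecidableEq β]
    {E : Finset (α × β)} {P : Finset α} {Q : Finset β} {κ : ℕ} :
    IsBiclique E κ P Q ↔
      P.card + Q.card = 2 * κ ∧ κ ^ 2 ≤ (E ∩ P ×ˢ Q).card := by
  constructor
  · rintro ⟨hP, hQ, hPQ⟩
    have hsub : P ×ˢ Q ⊆ E := fun q hq =>
      hPQ _ (Finset.mem_product.1 hq).1 _ (Finset.mem_product.1 hq).2
    rw [Finset.inter_eq_right.2 hsub, Finset.card_product, hP, hQ]
    exact ⟨by ring, by rw [sq]⟩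
  · rintro ⟨hsum, hinter⟩
    have hle : (E ∩ P ×ˢ Q).card ≤ P.card * Q.card :=
      (Finset.card_le_card Finset.inter_subset_right).trans_eq (Finset.card_product P Q)
    have hP : P.card = κ := by nlinarith
    have hQ : Q.card = κ := by omega
    have hsub : P ×ˢ Q ⊆ E := by
      rw [← Finset.inter_eq_right]
      refine Finset.eq_of_subset_of_card_le Finset.inter_subset_right ?_
      rwa [Finset.card_product, hP, hQ, ← sq]
    exact ⟨hP, hQ, fun i hi j hj => hsub (Finset.mk_mem_product hi hj)⟩

theorem card_sdiff_le_sub_iff {α : Type*} [DecidableEq α] {A B : Finset α} {m : ℕ} :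
    ((A \ B).card : ℤ) ≤ A.card - m ↔ m ≤ (A ∩ B).card := by
  have := Finset.card_sdiff_add_card_inter A B
  omega

theorem isBiclique_iff_sideTree {Eg : Finset (Fin N × Fin N)} {P Q : Finset (Fin N)} {κ : ℕ} :
    IsBiclique Eg κ P Q ↔
      (sideTree 0 P).innerCount + (sideTree 1 Q).innerCount = 2 * (N + 2) + 2 * κ ∧
        (errCountEns (sideTree 0 P) (sideTree 1 Q) (E15 N Eg) : ℤ) ≤ Eg.card - (κ : ℤ) ^ 2 := by
  rw [isBiclique_iff_sq_le_card_inter, innerCount_sideTree, innerCount_sideTree,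
    errCountEns_sideTree, ← Nat.cast_pow, card_sdiff_le_sub_iff]
  exact and_congr_left' (by omega)

end Biclique

open Biclique in
theorem stmt15_general (N : ℕ) (Eg : Finset (Fin N × Fin N)) (κ : ℕ) :
    (∃ P' Q' : Finset (Fin N), P'.card = κ ∧ Q'.card = κ ∧
        ∀ i ∈ P', ∀ j ∈ Q', (i, j) ∈ Eg)
    ↔ ∃ R : DTree (Fin 3) × DTree (Fin 3),
        Relation.ReflTransGen (EnsStep (E15 N Eg)) (Tside N 0, Tside N 1) R
        ∧ R.1.innerCount + R.2.innerCount = 2 * (N + 2) + 2 * κ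
        ∧ (errCountEns R.1 R.2 (E15 N Eg) : ℤ) ≤ (Eg.card : ℤ) - (κ : ℤ) ^ 2 := by
  constructor
  · rintro ⟨P, Q, hPQ⟩
    exact ⟨(sideTree 0 P, sideTree 1 Q), reflTransGen_ensStep_iff.2
      ⟨reflTransGen_replStepM_sideTree Eg 0 P, reflTransGen_replStepM_sideTree Eg 1 Q⟩,
      isBiclique_iff_sideTree.1 hPQ⟩
  · rintro ⟨⟨T₀, T₁⟩, hreach, hR⟩
    rcases κ.eq_zero_or_pos with rfl | hκ
    · exact ⟨∅, ∅, by simp⟩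
    have herr : errCountEns T₀ T₁ (E15 N Eg) < Eg.card := by
      have hsq : 0 < (κ : ℤ) ^ 2 := by positivity
      exact_mod_cast hR.2.trans_lt (sub_lt_self _ hsq)
    have hreach : ∀ s : Fin 2, Relation.ReflTransGen (ReplStepM (E15 N Eg))
        (Tside N s.castSucc) (![T₀, T₁] s) :=
      Fin.forall_fin_two.2 (reflTransGen_ensStep_iff.1 hreach)
    obtain ⟨P, rfl : T₀ = sideTree 0 P⟩ := exists_eq_sideTree_of_errCountEns_lt hreach herr 0
    obtain ⟨Q, rfl : T₁ = sideTree 1 Q⟩ := exists_eq_sideTree_of_errCountEns_lt hreach herr 1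
    exact ⟨P, Q, isBiclique_iff_sideTree.2 hR⟩

/-- Let `G` be a bipartite graph with partite sets `Fin N` and
`Fin N` (edges `Eg ⊆ Fin N × Fin N`, `M = |Eg|`) without isolated vertices, and let
`1 ≤ κ ≤ N`. Then `G` contains a `κ`-biclique iff the ensemble `{T_P, T_Q}` can be
pruned by subtree replacement operations so that the two resulting trees together
have exactly `2(N+2) + 2κ` inner nodes and the resulting ensemble makes at most
`M − κ²` errors on the constructed training set. -/
theorem stmt15 (N : ℕ) (Eg : Finset (Fin N × Fin N))
    (hiso₁ : ∀ i : Fin N, ∃ j, (i, j) ∈ Eg)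
    (hiso₂ : ∀ j : Fin N, ∃ i, (i, j) ∈ Eg)
    (κ : ℕ) (h1 : 1 ≤ κ) (h2 : κ ≤ N) :
    (∃ P' Q' : Finset (Fin N), P'.card = κ ∧ Q'.card = κ ∧
        ∀ i ∈ P', ∀ j ∈ Q', (i, j) ∈ Eg)
    ↔ ∃ R : DTree (Fin 3) × DTree (Fin 3),
        Relation.ReflTransGen (EnsStep (E15 N Eg)) (Tside N 0, Tside N 1) R
        ∧ R.1.innerCount + R.2.innerCount = 2 * (N + 2) + 2 * κ
        ∧ (errCountEns R.1 R.2 (E15 N Eg) : ℤ) ≤ (Eg.card : ℤ) - (κ : ℤ) ^ 2 :=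
  stmt15_general N Eg κ
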